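/- arXiv:math/9201214 — 2 statements merged into one kernel-verified Lean document; each statement's English description precedes it below -/
import Mathlib

section
/- Let E ⊆ ℕ be a finite set, let z be a nonzero real sequence supported on E, and let c > 0 satisfy c·|z|_{2,w} ≥ ω(E)^{(p-2)/(2p)} · |z|_p. Define the linear functional z*(x) = |z|_{2,w}^{-2} · ∑_{n∈E} z(n) x(n) w_n². Then for every real sequence x with |x_{|E}|_p < ∞: (i) |z*(x)| · |z|_{2,w} ≤ |x_{|E}|_{2,w}, and (ii) |z*(x)| · |z|_p ≤ c · |x_{|E}|_p. -/
open scoped ENNReal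

noncomputable section

/-- The `ℓ^p` norm of a real sequence, valued in `ℝ≥0∞`. -/
def pNorm (p : ℝ) (a : ℕ → ℝ) : ℝ≥0∞ :=
  (∑' n, ENNReal.ofReal (|a n| ^ p)) ^ (1 / p)

/-- The weighted `ℓ²` norm `|a|_{2,w}`, valued in `ℝ≥0∞`. -/
def wNorm (w : ℕ → ℝ) (a : ℕ → ℝ) : ℝ≥0∞ :=
  (∑' n, ENNReal.ofReal ((a n) ^ 2 * (w n) ^ 2)) ^ (1 / (2 : ℝ))

/-- `ω(E) = ∑_{n ∈ E} w_n^{2p/(p-2)}`, valued in `ℝ≥0∞`. -/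
def omegaE (p : ℝ) (w : ℕ → ℝ) (E : Set ℕ) : ℝ≥0∞ :=
  ∑' n : E, ENNReal.ofReal (w n ^ (2 * p / (p - 2)))

theorem wNorm_eq (w a : ℕ → ℝ) (F : Finset ℕ) (ha : ∀ n ∉ F, a n = 0) :
    wNorm w a = ENNReal.ofReal (Real.sqrt (∑ n ∈ F, (a n) ^ 2 * (w n) ^ 2)) := by
  unfold wNorm
  rw [tsum_eq_sum (s := F) (fun n hn => by simp [ha n hn]),
    ← ENNReal.ofReal_sum_of_nonneg (fun n _ => by positivity),
    ENNReal.ofReal_rpow_of_nonneg (Finset.sum_nonneg fun n _ => by positivity) (by norm_num),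
    Real.sqrt_eq_rpow]

theorem pNorm_eq (p : ℝ) (hp : 2 < p) (a : ℕ → ℝ) (F : Finset ℕ) (ha : ∀ n ∉ F, a n = 0) :
    pNorm p a = ENNReal.ofReal ((∑ n ∈ F, |a n| ^ p) ^ (1 / p)) := by
  unfold pNorm
  have hp0 : p ≠ 0 := by linarith
  rw [tsum_eq_sum (s := F) (fun n hn => by simp [ha n hn, Real.zero_rpow hp0]),
    ← ENNReal.ofReal_sum_of_nonneg (fun n _ => by positivity),
    ENNReal.ofReal_rpow_of_nonneg (Finset.sum_nonneg fun n _ => by positivity) (by positivity)]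

theorem holder_aux (p : ℝ) (hp : 2 < p) (w : ℕ → ℝ) (hw : ∀ n, 0 < w n) (a : ℕ → ℝ)
    (F : Finset ℕ) :
    Real.sqrt (∑ n ∈ F, (a n) ^ 2 * (w n) ^ 2) ≤
      (∑ n ∈ F, w n ^ (2 * p / (p - 2))) ^ ((p - 2) / (2 * p)) *
        (∑ n ∈ F, |a n| ^ p) ^ (1 / p) := by
  have h2 : 0 < p - 2 := by linarith
  have hp0 : 0 < p := by linarith
  have hpq : (p / 2).HolderConjugate (p / (p - 2)) := by
    rw [Real.holderConjugate_iff]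
    constructor
    · linarith
    · field_simp
      ring
  have H := Real.inner_le_Lp_mul_Lq_of_nonneg F (f := fun n => (a n) ^ 2)
    (g := fun n => (w n) ^ 2) hpq (fun n _ => by positivity) (fun n _ => by positivity)
  have e1 : ∀ n, ((a n) ^ 2) ^ (p / 2) = |a n| ^ p := by
    intro n
    rw [← sq_abs, ← Real.rpow_natCast, ← Real.rpow_mul (abs_nonneg _)]
    congr 1
    push_cast
    ring
  have e2 : ∀ n, ((w n) ^ 2) ^ (p / (p - 2)) = w n ^ (2 * p / (p - 2)) := by
    intro n
    rw [← Real.rpow_natCast, ← Real.rpow_mul (hw n).le]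
    congr 1
    push_cast
    ring
  simp only [e1, e2] at H
  have hA : 0 ≤ ∑ n ∈ F, |a n| ^ p := Finset.sum_nonneg fun n _ => by positivity
  have hB : 0 ≤ ∑ n ∈ F, w n ^ (2 * p / (p - 2)) :=
    Finset.sum_nonneg fun n _ => Real.rpow_nonneg (hw n).le _
  apply Real.sqrt_le_iff.2
  refine ⟨by positivity, H.trans (le_of_eq ?_)⟩
  rw [mul_pow, ← Real.rpow_natCast (_ ^ _), ← Real.rpow_natCast (_ ^ _), ← Real.rpow_mul hA,
    ← Real.rpow_mul hB, mul_comm]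
  congr 2
  · push_cast
    field_simp
  · push_cast
    field_simp

/-- if `z ≠ 0` is supported on a finite set `E` and
`c |z|_{2,w} ≥ ω(E)^{(p-2)/(2p)} |z|_p`, then the functional
`z*(x) = |z|_{2,w}⁻² ∑_{n ∈ E} z(n) x(n) w_n²` satisfies
`|z*(x)| |z|_{2,w} ≤ |x_{|E}|_{2,w}` and `|z*(x)| |z|_p ≤ c |x_{|E}|_p`
for every `x` with `|x_{|E}|_p < ∞`. -/
theorem stmt1 (p : ℝ) (hp : 2 < p) (w : ℕ → ℝ) (hw : ∀ n, 0 < w n)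
    (E : Set ℕ) (hE : E.Finite)
    (z : ℕ → ℝ) (hzsupp : ∀ n ∉ E, z n = 0) (hz : z ≠ 0)
    (c : ℝ) (hc : 0 < c)
    (hcz : ENNReal.ofReal c * wNorm w z ≥ omegaE p w E ^ ((p - 2) / (2 * p)) * pNorm p z)
    (zstar : (ℕ → ℝ) → ℝ)
    (hzstar : ∀ x : ℕ → ℝ,
      zstar x = ((wNorm w z).toReal ^ 2)⁻¹ * ∑ n ∈ hE.toFinset, z n * x n * w n ^ 2)
    (x : ℕ → ℝ) (hx : pNorm p (E.indicator x) < ⊤) :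
    ENNReal.ofReal |zstar x| * wNorm w z ≤ wNorm w (E.indicator x) ∧
    ENNReal.ofReal |zstar x| * pNorm p z ≤ ENNReal.ofReal c * pNorm p (E.indicator x) := by
  have hp0 : 0 < p := by linarith
  obtain ⟨F, hF⟩ : ∃ F, F = hE.toFinset := ⟨_, rfl⟩
  have hmem : ∀ n, n ∈ F ↔ n ∈ E := by intro n; simp [hF]
  have hz0 : ∀ n ∉ F, z n = 0 := fun n hn => hzsupp n (fun h => hn ((hmem n).2 h))
  have hx0 : ∀ n ∉ F, E.indicator x n = 0 := fun n hn =>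
    Set.indicator_of_notMem (fun h => hn ((hmem n).2 h)) x
  have hxe : ∀ n ∈ F, E.indicator x n = x n := fun n hn =>
    Set.indicator_of_mem ((hmem n).1 hn) x
  have hom : omegaE p w E = ENNReal.ofReal (∑ n ∈ F, w n ^ (2 * p / (p - 2))) := by
    unfold omegaE
    have : E = (F : Set ℕ) := by ext n; simp [hmem]
    rw [this, Finset.tsum_subtype' F (fun n => ENNReal.ofReal (w n ^ (2 * p / (p - 2)))),
      ENNReal.ofReal_sum_of_nonneg (fun n _ => Real.rpow_nonneg (hw n).le _)]
  have hB : 0 ≤ ∑ n ∈ F, w n ^ (2 * p / (p - 2)) :=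
    Finset.sum_nonneg fun n _ => Real.rpow_nonneg (hw n).le _
  have hz2pos : 0 < ∑ n ∈ F, (z n) ^ 2 * (w n) ^ 2 := by
    obtain ⟨m, hm⟩ := Function.ne_iff.1 hz
    have hm' : z m ≠ 0 := hm
    refine Finset.sum_pos' (fun n _ => by positivity) ⟨m, ?_, ?_⟩
    · by_contra h
      exact hm' (hz0 m h)
    · have := hw m
      positivity
  have hS : 0 < Real.sqrt (∑ n ∈ F, (z n) ^ 2 * (w n) ^ 2) := Real.sqrt_pos.2 hz2pos
  have hwz := wNorm_eq w z F hz0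
  have h1 : ENNReal.ofReal |zstar x| * wNorm w z ≤ wNorm w (E.indicator x) := by
    rw [hzstar x, hwz, wNorm_eq w _ F hx0, ENNReal.toReal_ofReal hS.le,
      ← ENNReal.ofReal_mul (abs_nonneg _), ← hF]
    apply ENNReal.ofReal_le_ofReal
    have hcs : |∑ n ∈ F, z n * x n * w n ^ 2| ≤
        Real.sqrt (∑ n ∈ F, (z n) ^ 2 * (w n) ^ 2) *
          Real.sqrt (∑ n ∈ F, (E.indicator x n) ^ 2 * (w n) ^ 2) := by
      rw [← Real.sqrt_mul hz2pos.le]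
      apply Real.abs_le_sqrt
      have := Finset.sum_mul_sq_le_sq_mul_sq F (fun n => z n * w n)
        (fun n => E.indicator x n * w n)
      simp only [mul_pow] at this
      refine le_trans (le_of_eq ?_) this
      congr 1
      refine Finset.sum_congr rfl fun n hn => ?_
      rw [hxe n hn]
      ring
    rw [abs_mul, abs_of_nonneg (by positivity)]
    generalize Real.sqrt (∑ n ∈ F, (z n) ^ 2 * (w n) ^ 2) = S at *
    calc (S ^ 2)⁻¹ * |∑ n ∈ F, z n * x n * w n ^ 2| * S
        ≤ (S ^ 2)⁻¹ * (S * Real.sqrt (∑ n ∈ F, (E.indicator x n) ^ 2 * (w n) ^ 2)) * S := by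
          gcongr
      _ = _ := by field_simp
  refine ⟨h1, ?_⟩
  have h2 : wNorm w (E.indicator x) ≤
      omegaE p w E ^ ((p - 2) / (2 * p)) * pNorm p (E.indicator x) := by
    have he : 0 ≤ (p - 2) / (2 * p) := div_nonneg (by linarith) (by linarith)
    rw [wNorm_eq w _ F hx0, hom, pNorm_eq p hp _ F hx0, ENNReal.ofReal_rpow_of_nonneg hB he,
      ← ENNReal.ofReal_mul (Real.rpow_nonneg hB _)]
    exact ENNReal.ofReal_le_ofReal (holder_aux p hp w hw _ F)
  have hne : wNorm w z ≠ 0 := by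
    rw [hwz]
    simpa using hS
  have hnt : wNorm w z ≠ ⊤ := by
    rw [hwz]
    exact ENNReal.ofReal_ne_top
  rw [← ENNReal.mul_le_mul_iff_left hne hnt]
  calc ENNReal.ofReal |zstar x| * pNorm p z * wNorm w z
      = (ENNReal.ofReal |zstar x| * wNorm w z) * pNorm p z := by ring
    _ ≤ (omegaE p w E ^ ((p - 2) / (2 * p)) * pNorm p (E.indicator x)) * pNorm p z := by
        exact mul_le_mul' (h1.trans h2) le_rfl
    _ = (omegaE p w E ^ ((p - 2) / (2 * p)) * pNorm p z) * pNorm p (E.indicator x) := by ring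
    _ ≤ (ENNReal.ofReal c * wNorm w z) * pNorm p (E.indicator x) := by
        gcongr
    _ = _ := by ring
end
end

section
/- Let y be a real sequence with 0 < |y|_{2,w} ≤ 1, let ρ > 0, and set E = { j ∈ ℕ : |y(j)| ≥ ρ · w_j^{2/(p-2)} · |y|_{2,w}^{-2/(p-2)} }. Then ∑_{j∉E} |y(j)|^p ≤ ρ^{p-2}; in particular |y_{|ℕ∖E}|_p ≤ ρ^{1-2/p}. -/
open scoped ENNReal

noncomputable section

/-- for `0 < |y|_{2,w} ≤ 1`, `ρ > 0` and
`E = {j : |y(j)| ≥ ρ w_j^{2/(p-2)} |y|_{2,w}^{-2/(p-2)}}` one has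
`∑_{j ∉ E} |y(j)|^p ≤ ρ^{p-2}`; in particular `|y_{|ℕ∖E}|_p ≤ ρ^{1-2/p}`. -/
theorem stmt9 (p : ℝ) (hp : 2 < p) (w : ℕ → ℝ) (hw : ∀ n, 0 < w n)
    (y : ℕ → ℝ) (hy0 : 0 < wNorm w y) (hy1 : wNorm w y ≤ 1)
    (ρ : ℝ) (hρ : 0 < ρ)
    (E : Set ℕ)
    (hEdef : E = {j : ℕ | |y j| ≥ ρ * w j ^ (2 / (p - 2)) * (wNorm w y).toReal ^ (-2 / (p - 2))}) :
    (∑' j : ↥Eᶜ, ENNReal.ofReal (|y (j : ℕ)| ^ p)) ≤ ENNReal.ofReal (ρ ^ (p - 2)) ∧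
    pNorm p (Eᶜ.indicator y) ≤ ENNReal.ofReal (ρ ^ (1 - 2 / p)) := by
  have hp2 : 0 < p - 2 := by linarith
  have hp0 : 0 < p := by linarith
  have hNtop : wNorm w y ≠ ⊤ := ne_top_of_le_ne_top ENNReal.one_ne_top hy1
  have hN : 0 < (wNorm w y).toReal := ENNReal.toReal_pos hy0.ne' hNtop
  have hS : (∑' n, ENNReal.ofReal ((y n) ^ 2 * (w n) ^ 2))
      = ENNReal.ofReal ((wNorm w y).toReal ^ 2) := by
    rw [ENNReal.ofReal_pow hN.le, ENNReal.ofReal_toReal hNtop, wNorm,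
      ← ENNReal.rpow_natCast, ← ENNReal.rpow_mul]
    norm_num
  generalize (wNorm w y).toReal = N at *
  have key : ∀ j ∈ Eᶜ, |y j| ^ p ≤ (ρ ^ (p - 2) * (N ^ 2)⁻¹) * ((y j) ^ 2 * (w j) ^ 2) := by
    intro j hj
    rw [hEdef] at hj
    have hj' : |y j| < ρ * w j ^ (2 / (p - 2)) * N ^ (-2 / (p - 2)) := by simpa using hj
    have h1 : |y j| ^ (p - 2) ≤ ρ ^ (p - 2) * (w j) ^ 2 * (N ^ 2)⁻¹ := by
      have h := Real.rpow_le_rpow (abs_nonneg _) hj'.le hp2.le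
      have hwj := hw j
      rw [Real.mul_rpow (by positivity) (by positivity),
        Real.mul_rpow (by positivity) (by positivity), ← Real.rpow_mul hwj.le,
        ← Real.rpow_mul hN.le, div_mul_cancel₀ _ hp2.ne', div_mul_cancel₀ _ hp2.ne',
        Real.rpow_neg hN.le, Real.rpow_two, Real.rpow_two] at h
      exact h
    have h2 : |y j| ^ p = |y j| ^ (p - 2) * (y j) ^ 2 := by
      rw [← sq_abs (y j), ← Real.rpow_two, ← Real.rpow_add' (abs_nonneg _) (by linarith)]
      congr 1; ring
    rw [h2]
    calc _ ≤ (ρ ^ (p - 2) * (w j) ^ 2 * (N ^ 2)⁻¹) * (y j) ^ 2 := by gcongr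
      _ = _ := by ring
  have main : (∑' j : ↥Eᶜ, ENNReal.ofReal (|y (j : ℕ)| ^ p)) ≤ ENNReal.ofReal (ρ ^ (p - 2)) := by
    have hc : 0 ≤ ρ ^ (p - 2) * (N ^ 2)⁻¹ := by positivity
    calc _ ≤ ∑' j : ↥Eᶜ, ENNReal.ofReal (ρ ^ (p - 2) * (N ^ 2)⁻¹) *
              ENNReal.ofReal ((y j) ^ 2 * (w j) ^ 2) := by
            refine ENNReal.tsum_le_tsum fun j => ?_
            rw [← ENNReal.ofReal_mul hc]
            exact ENNReal.ofReal_le_ofReal (key j j.2)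
      _ = ENNReal.ofReal (ρ ^ (p - 2) * (N ^ 2)⁻¹) *
            ∑' j : ↥Eᶜ, ENNReal.ofReal ((y j) ^ 2 * (w j) ^ 2) := ENNReal.tsum_mul_left
      _ ≤ ENNReal.ofReal (ρ ^ (p - 2) * (N ^ 2)⁻¹) * ENNReal.ofReal (N ^ 2) := by
            rw [← hS]
            gcongr
            exact ENNReal.tsum_comp_le_tsum_of_injective Subtype.val_injective
              (fun n => ENNReal.ofReal ((y n) ^ 2 * (w n) ^ 2))
      _ = _ := by
            rw [← ENNReal.ofReal_mul hc]
            congr 1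
            field_simp
  refine ⟨main, ?_⟩
  have h3 : (∑' n, ENNReal.ofReal (|Eᶜ.indicator y n| ^ p))
      = ∑' j : ↥Eᶜ, ENNReal.ofReal (|y (j : ℕ)| ^ p) := by
    rw [tsum_subtype Eᶜ (fun n => ENNReal.ofReal (|y n| ^ p))]
    refine tsum_congr fun n => ?_
    by_cases hn : n ∈ Eᶜ
    · rw [Set.indicator_of_mem hn, Set.indicator_of_mem hn]
    · rw [Set.indicator_of_notMem hn, Set.indicator_of_notMem hn]
      simp [Real.zero_rpow hp0.ne']
  rw [pNorm, h3]
  calc _ ≤ (ENNReal.ofReal (ρ ^ (p - 2))) ^ (1 / p) :=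
        ENNReal.rpow_le_rpow main (by positivity)
    _ = _ := by
        rw [ENNReal.ofReal_rpow_of_nonneg (by positivity) (by positivity), ← Real.rpow_mul hρ.le]
        congr 2
        field_simp
end
end
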